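/- arXiv:2105.08558 — 6 statements merged into one kernel-verified Lean document; each statement's English description precedes it below -/
import Mathlib

section
/- Let ℓ > 0 and let α : [0, ℓ/4] → ℝ³ be continuous. Then the ℓ-periodic extension g of the glued map is continuous on all of ℝ if and only if α(0) ∈ ℝe₃ and α(ℓ/4) ∈ ℝe₁. -/
/-!
The curve `glue ℓ α` can only jump at the junctions `0, ℓ/4, ℓ/2, 3ℓ/4` (mod `ℓ`). At `ℓ/4` and
`3ℓ/4` the two one-sided values agree iff `α(ℓ/4)` is fixed by `R₁` (as `R₂ = R₃R₁`), i.e. lies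
on `ℝe₁`; at `ℓ/2` and `0` they agree iff `α(0)` is fixed by `R₃`, i.e. lies on `ℝe₃`.

The arc `α` is first replaced by a continuous `β : ℝ → ℝ³` agreeing with it on `[0, ℓ/4]`
(`glue_congr`). If the glued curve is continuous, two continuous functions that agree on an open
quarter period agree at its right endpoint; at `ℓ/4` and `ℓ/2` this gives the two conditions.
Conversely, under the conditions one period (`period`) is a continuous function with equal values
at `0` and `ℓ`, so its composition with the fractional part is continuous (`glue_eq_fract`).
-/

noncomputable section

open Real Set

/-- Euclidean three-space. -/
abbrev E3 : Type := EuclideanSpace ℝ (Fin 3)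

/-- The vector (a,b,c) ∈ ℝ³ (with the Euclidean norm). -/
def vec3 (a b c : ℝ) : E3 := (WithLp.equiv 2 (Fin 3 → ℝ)).symm ![a, b, c]

/-- The standard basis vectors. -/
def e1 : E3 := vec3 1 0 0
def e2 : E3 := vec3 0 1 0
def e3 : E3 := vec3 0 0 1

/-- The rotations `R₁, R₂, R₃` by angle π about the coordinate axes `ℝe₁, ℝe₂, ℝe₃`
(indexed by `0, 1, 2 : Fin 3`). -/
def Rot : Fin 3 → E3 → E3 :=
  ![fun x => vec3 (x 0) (-x 1) (-x 2),
    fun x => vec3 (-x 0) (x 1) (-x 2),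
    fun x => vec3 (-x 0) (-x 1) (x 2)]

/-- The dihedral parameter transformations `ψ₁^ℓ(t) = ℓ/2 - t`, `ψ₂^ℓ(t) = t - ℓ/2`,
`ψ₃^ℓ(t) = ℓ - t` (indexed by `0, 1, 2 : Fin 3`). -/
def psi (ℓ : ℝ) : Fin 3 → ℝ → ℝ :=
  ![fun t => ℓ / 2 - t, fun t => t - ℓ / 2, fun t => ℓ - t]

/-- An `ℓ`-periodic curve `γ : ℝ → ℝ³` is D₂-symmetric if `Rᵢ(γ(ψᵢ^ℓ(t))) = γ(t)`
for all `t ∈ ℝ` and `i = 1,2,3`. -/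
def DihedralSymmetric (ℓ : ℝ) (γ : ℝ → E3) : Prop :=
  ∀ i : Fin 3, ∀ t : ℝ, Rot i (γ (psi ℓ i t)) = γ t

/-- The `ℓ`-periodic extension of the glued map built from a generating arc `α`:
`g(t) = α(t)` on `[0, ℓ/4)`, `g(t) = Rᵢ(α(ψᵢ^ℓ(t)))` on `[iℓ/4, (i+1)ℓ/4)` for `i = 1,2,3`,
extended `ℓ`-periodically. -/
def glue (ℓ : ℝ) (α : ℝ → E3) (t : ℝ) : E3 :=
  let s := t - ℓ * (⌊t / ℓ⌋ : ℝ)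
  if s < ℓ / 4 then α s
  else if s < ℓ / 2 then Rot 0 (α (psi ℓ 0 s))
  else if s < 3 * ℓ / 4 then Rot 1 (α (psi ℓ 1 s))
  else Rot 2 (α (psi ℓ 2 s))

lemma continuous_Rot (i : Fin 3) : Continuous (Rot i) := by
  have hv : ∀ f g h : E3 → ℝ, Continuous f → Continuous g → Continuous h →
      Continuous fun x => vec3 (f x) (g x) (h x) := by
    intro f g h hf hg hh
    refine (PiLp.continuous_toLp 2 (fun _ : Fin 3 => ℝ)).comp (continuous_pi fun j => ?_)
    fin_cases j <;> simpa
  fin_cases i <;> exact hv _ _ _ (by fun_prop) (by fun_prop) (by fun_prop)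

lemma Rot_zero_fixed_iff (x : E3) : x = Rot 0 x ↔ ∃ c : ℝ, x = c • e1 := by
  constructor
  · intro h
    refine ⟨x 0, ?_⟩
    have h1 := congrArg (fun y : E3 => y 1) h
    have h2 := congrArg (fun y : E3 => y 2) h
    simp [Rot, vec3] at h1 h2
    ext j
    fin_cases j <;> simp [e1, vec3] <;> linarith
  · rintro ⟨c, rfl⟩
    ext j
    fin_cases j <;> simp [Rot, e1, vec3]

lemma Rot_zero_eq_Rot_one_iff (x : E3) : Rot 0 x = Rot 1 x ↔ ∃ c : ℝ, x = c • e3 := by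
  constructor
  · intro h
    refine ⟨x 2, ?_⟩
    have h0 := congrArg (fun y : E3 => y 0) h
    have h1 := congrArg (fun y : E3 => y 1) h
    simp [Rot, vec3] at h0 h1
    ext j
    fin_cases j <;> simp [e3, vec3] <;> linarith
  · rintro ⟨c, rfl⟩
    ext j
    fin_cases j <;> simp [Rot, e3, vec3]

/-- The glued map on one period: `glue` without the reduction of the parameter modulo `ℓ`. -/
def period (ℓ : ℝ) (α : ℝ → E3) (s : ℝ) : E3 :=
  if s < ℓ / 4 then α s
  else if s < ℓ / 2 then Rot 0 (α (psi ℓ 0 s))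
  else if s < 3 * ℓ / 4 then Rot 1 (α (psi ℓ 1 s))
  else Rot 2 (α (psi ℓ 2 s))

lemma glue_eq_fract {ℓ : ℝ} (hℓ : 0 < ℓ) (α : ℝ → E3) (t : ℝ) :
    glue ℓ α t = period ℓ α (ℓ * Int.fract (t / ℓ)) := by
  have h : ℓ * Int.fract (t / ℓ) = t - ℓ * (⌊t / ℓ⌋ : ℝ) := by
    rw [Int.fract, mul_sub, mul_div_cancel₀ _ hℓ.ne']
  rw [h]
  rfl

lemma glue_eq_period {ℓ : ℝ} (hℓ : 0 < ℓ) (α : ℝ → E3) {t : ℝ} (h0 : 0 ≤ t) (h1 : t < ℓ) :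
    glue ℓ α t = period ℓ α t := by
  rw [glue_eq_fract hℓ, Int.fract_eq_self.2 ⟨by positivity, (div_lt_one hℓ).2 h1⟩,
    mul_div_cancel₀ _ hℓ.ne']

/-- The glued map only depends on the values of the arc on `[0, ℓ/4]`. -/
lemma glue_congr {ℓ : ℝ} (hℓ : 0 < ℓ) {α β : ℝ → E3} (h : EqOn α β (Icc 0 (ℓ / 4))) :
    glue ℓ α = glue ℓ β := by
  funext t
  rw [glue_eq_fract hℓ, glue_eq_fract hℓ]
  have h0 : 0 ≤ ℓ * Int.fract (t / ℓ) := mul_nonneg hℓ.le (Int.fract_nonneg _)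
  have h1 : ℓ * Int.fract (t / ℓ) < ℓ := by nlinarith [Int.fract_lt_one (t / ℓ)]
  generalize ℓ * Int.fract (t / ℓ) = s at h0 h1
  unfold period
  split_ifs
  · exact h ⟨h0, by linarith⟩
  all_goals
    congr 1
    apply h
    constructor <;> simp [psi] <;> linarith

lemma continuous_period {ℓ : ℝ} (hℓ : 0 < ℓ) {β : ℝ → E3} (hβ : Continuous β)
    (h0 : ∃ c : ℝ, β 0 = c • e3) (h1 : ∃ c : ℝ, β (ℓ / 4) = c • e1) :
    Continuous (period ℓ β) := by
  have hpsi : ∀ i, Continuous (psi ℓ i) := by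
    intro i
    fin_cases i <;> simp [psi] <;> fun_prop
  have hc : ∀ i, Continuous fun s => Rot i (β (psi ℓ i s)) := fun i =>
    (continuous_Rot i).comp (hβ.comp (hpsi i))
  have heq : period ℓ β = fun s =>
      if ℓ / 4 ≤ s then
        if ℓ / 2 ≤ s then
          if 3 * ℓ / 4 ≤ s then Rot 2 (β (psi ℓ 2 s)) else Rot 1 (β (psi ℓ 1 s))
        else Rot 0 (β (psi ℓ 0 s))
      else β s := by
    funext s
    simp only [period, ← not_lt, ite_not]
  rw [heq]
  refine Continuous.if_le (Continuous.if_le (Continuous.if_le (hc 2) (hc 1) continuous_const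
    continuous_id ?_) (hc 0) continuous_const continuous_id ?_) hβ continuous_const
    continuous_id ?_
  · rintro s rfl
    obtain ⟨c, hc⟩ := h1
    have e1' : psi ℓ 2 (3 * ℓ / 4) = ℓ / 4 := by simp [psi]; ring
    have e2' : psi ℓ 1 (3 * ℓ / 4) = ℓ / 4 := by simp [psi]; ring
    simp only [e1', e2', hc]
    ext j
    fin_cases j <;> simp [Rot, e1, vec3]
  · rintro s rfl
    have e1' : psi ℓ 1 (ℓ / 2) = 0 := by simp [psi]
    have e2' : psi ℓ 0 (ℓ / 2) = 0 := by simp [psi]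
    rw [if_neg (by linarith)]
    simp only [e1', e2']
    exact ((Rot_zero_eq_Rot_one_iff _).2 h0).symm
  · rintro s rfl
    have e1' : psi ℓ 0 (ℓ / 4) = ℓ / 4 := by simp [psi]; ring
    rw [if_neg (by linarith)]
    simp only [e1']
    exact ((Rot_zero_fixed_iff _).2 h1).symm

lemma continuous_glue {ℓ : ℝ} (hℓ : 0 < ℓ) {β : ℝ → E3} (hβ : Continuous β)
    (h0 : ∃ c : ℝ, β 0 = c • e3) (h1 : ∃ c : ℝ, β (ℓ / 4) = c • e1) :
    Continuous (glue ℓ β) := by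
  have hp := continuous_period hℓ hβ h0 h1
  have hends : period ℓ β (ℓ * 0) = period ℓ β (ℓ * 1) := by
    obtain ⟨c, hc⟩ := h0
    have e : psi ℓ 2 ℓ = 0 := by simp [psi]
    rw [mul_zero, mul_one, period, period, if_pos (by linarith), if_neg (by linarith),
      if_neg (by linarith), if_neg (by linarith), e, hc]
    ext j
    fin_cases j <;> simp [Rot, e3, vec3]
  have hf : Continuous ((fun u => period ℓ β (ℓ * u)) ∘ Int.fract) :=
    ContinuousOn.comp_fract'' (by fun_prop) hends
  have : glue ℓ β = fun t => ((fun u => period ℓ β (ℓ * u)) ∘ Int.fract) (t / ℓ) :=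
    funext fun t => glue_eq_fract hℓ β t
  rw [this]
  exact hf.comp (continuous_id.div_const ℓ)

/-- A continuous function agreeing with another one on `(a, b)` agrees with it at `b`. -/
lemma eq_right_of_eqOn_Ioo {f g : ℝ → E3} (hf : Continuous f) (hg : Continuous g) {a b : ℝ}
    (hab : a < b) (h : EqOn f g (Ioo a b)) : f b = g b := by
  have := h.closure hf hg
  rw [closure_Ioo hab.ne] at this
  exact this (right_mem_Icc.2 hab.le)

lemma endpoints_of_continuous_glue {ℓ : ℝ} (hℓ : 0 < ℓ) {β : ℝ → E3} (hβ : Continuous β)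
    (hg : Continuous (glue ℓ β)) :
    (∃ c : ℝ, β 0 = c • e3) ∧ (∃ c : ℝ, β (ℓ / 4) = c • e1) := by
  constructor
  · rw [← Rot_zero_eq_Rot_one_iff]
    have hc : Continuous fun s => Rot 0 (β (psi ℓ 0 s)) :=
      (continuous_Rot 0).comp (hβ.comp (by simp [psi]; fun_prop))
    have h := eq_right_of_eqOn_Ioo hc hg (a := ℓ / 4) (b := ℓ / 2) (by linarith) fun s hs => by
      obtain ⟨hs1, hs2⟩ := hs
      rw [glue_eq_period hℓ β (by linarith) (by linarith), period, if_neg (by linarith),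
        if_pos hs2]
    rw [glue_eq_period hℓ β (by linarith) (by linarith), period, if_neg (by linarith),
      if_neg (by linarith), if_pos (by linarith)] at h
    simpa [psi] using h
  · rw [← Rot_zero_fixed_iff]
    have h := eq_right_of_eqOn_Ioo hβ hg (a := 0) (b := ℓ / 4) (by linarith) fun s hs => by
      obtain ⟨hs1, hs2⟩ := hs
      rw [glue_eq_period hℓ β (by linarith) (by linarith), period, if_pos hs2]
    have e : psi ℓ 0 (ℓ / 4) = ℓ / 4 := by simp [psi]; ring
    rwa [glue_eq_period hℓ β (by linarith) (by linarith), period, if_neg (by linarith),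
      if_pos (by linarith), e] at h

/-- For continuous `α : [0, ℓ/4] → ℝ³`, the `ℓ`-periodic extension `g` of
the glued map is continuous on all of `ℝ` if and only if `α(0) ∈ ℝe₃` and `α(ℓ/4) ∈ ℝe₁`. -/
theorem glued_curve_continuous_iff (ℓ : ℝ) (hℓ : 0 < ℓ) (α : ℝ → E3)
    (hcont : ContinuousOn α (Icc 0 (ℓ / 4))) :
    Continuous (glue ℓ α) ↔
      ((∃ c : ℝ, α 0 = c • e3) ∧ (∃ c : ℝ, α (ℓ / 4) = c • e1)) := by
  have h4 : (0 : ℝ) ≤ ℓ / 4 := by linarith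
  -- the continuous extension of `α` that is constant on either side of `[0, ℓ/4]`
  let β : ℝ → E3 := IccExtend h4 ((Icc 0 (ℓ / 4)).domRestrict α)
  have hβ : Continuous β := hcont.domRestrict.Icc_extend'
  have hαβ : EqOn α β (Icc 0 (ℓ / 4)) := fun t ht =>
    (IccExtend_of_mem h4 ((Icc 0 (ℓ / 4)).domRestrict α) ht).symm
  rw [glue_congr hℓ hαβ, hαβ (left_mem_Icc.2 h4), hαβ (right_mem_Icc.2 h4)]
  exact ⟨endpoints_of_continuous_glue hℓ hβ, fun h => continuous_glue hℓ hβ h.1 h.2⟩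
end
end

section
/- Let ℓ > 0 and let α : [0, ℓ/4] → ℝ³ be continuously differentiable. Then the ℓ-periodic extension g of the glued map is continuously differentiable on all of ℝ if and only if α(0) ∈ ℝe₃, α(ℓ/4) ∈ ℝe₁, α'(0) ∈ span{e₁, e₂}, and α'(ℓ/4) ∈ span{e₂, e₃}. -/
/-! The curve consists of the isometric copies `R α(± t + c)` of the arc, joined at the multiples
of `ℓ/4`. Two C¹ pieces meeting at a point form a C¹ curve near it if and only if their values and
one-sided derivatives agree there (`contDiffOn_glue_iff`), and by periodicity only the junctions
`ℓ/4`, `ℓ/2`, `3ℓ/4`, `ℓ` matter (`glue_contDiff_iff`). At `ℓ/4` agreement says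
`α(ℓ/4) = R₁ α(ℓ/4)` and `α'(ℓ/4) = -R₁ α'(ℓ/4)`, i.e. `α(ℓ/4) ∈ ℝe₁` and `α'(ℓ/4) ⟂ e₁`; at `ℓ/2`
it says `R₁ α(0) = R₂ α(0)` and `-R₁ α'(0) = R₂ α'(0)`, i.e. `α(0) ∈ ℝe₃` and `α'(0) ⟂ e₃`. The
remaining two junctions give the same conditions again. -/

noncomputable section

open Real Set

/-! ### Gluing two C¹ pieces at a point -/

/-- Two C¹ pieces `u` on `[a, b]` and `v` on `[b, c]`, with derivatives `u'` and `v'`, glue to a C¹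
curve on `(a, c)` exactly when their values and one-sided derivatives agree at `b`. -/
lemma contDiffOn_glue_iff {E : Type*} [NormedAddCommGroup E] [NormedSpace ℝ E]
    {f u v u' v' : ℝ → E} {a b c : ℝ} (hab : a < b) (hbc : b < c)
    (hfu : EqOn f u (Ico a b)) (hfv : EqOn f v (Ico b c))
    (hu : ∀ t ∈ Icc a b, HasDerivWithinAt u (u' t) (Icc a b) t)
    (hu' : ContinuousOn u' (Icc a b))
    (hv : ∀ t ∈ Icc b c, HasDerivWithinAt v (v' t) (Icc b c) t)
    (hv' : ContinuousOn v' (Icc b c)) :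
    ContDiffOn ℝ 1 f (Ioo a c) ↔ u b = v b ∧ u' b = v' b := by
  have hfb : f b = v b := hfv ⟨le_rfl, hbc⟩
  have hvb : HasDerivWithinAt f (v' b) (Ico b c) b :=
    ((hv b ⟨le_rfl, hbc.le⟩).mono Ico_subset_Icc_self).congr hfv hfb
  have hub : HasDerivWithinAt u (u' b) (Icc a b) b := hu b ⟨hab.le, le_rfl⟩
  have hfu_Icc : u b = v b → EqOn f u (Icc a b) := by
    intro h t ht
    rcases ht.2.lt_or_eq with h' | rfl
    · exact hfu ⟨ht.1, h'⟩
    · rw [hfb, h]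
  constructor
  · intro hf
    have hfd : DifferentiableAt ℝ f b :=
      (hf.differentiableOn one_ne_zero).differentiableAt (Ioo_mem_nhds hab hbc)
    -- `f` and `u` have the same limit at `b` from the left
    have hval : u b = v b := by
      have hne : (nhdsWithin b (Ico a b)).NeBot := by
        rw [← mem_closure_iff_nhdsWithin_neBot, closure_Ico hab.ne]
        exact ⟨hab.le, le_rfl⟩
      have h1 : Filter.Tendsto f (nhdsWithin b (Ico a b)) (nhds (f b)) :=
        hfd.continuousAt.continuousWithinAt
      have h2 : Filter.Tendsto u (nhdsWithin b (Ico a b)) (nhds (u b)) :=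
        (hub.continuousWithinAt.mono Ico_subset_Icc_self)
      have h3 := h1.congr' (hfu.eventuallyEq_nhdsWithin)
      rw [← hfb]
      exact tendsto_nhds_unique h2 h3
    refine ⟨hval, ?_⟩
    have h1 : HasDerivWithinAt f (u' b) (Icc a b) b :=
      hub.congr (hfu_Icc hval) (hfu_Icc hval ⟨hab.le, le_rfl⟩)
    have h2 : u' b = deriv f b :=
      (uniqueDiffOn_Icc hab b ⟨hab.le, le_rfl⟩).eq_deriv _ h1 hfd.hasDerivAt.hasDerivWithinAt
    have h3 : v' b = deriv f b :=
      (uniqueDiffOn_Ico b c b ⟨le_rfl, hbc⟩).eq_deriv _ hvb hfd.hasDerivAt.hasDerivWithinAt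
    rw [h2, h3]
  · rintro ⟨hval, hder⟩
    let d : ℝ → E := fun t => if t ≤ b then u' t else v' t
    have hdu : EqOn d u' (Icc a b) := fun t ht => if_pos ht.2
    have hdv : EqOn d v' (Icc b c) := by
      intro t ht
      rcases ht.1.eq_or_lt with rfl | h
      · exact (if_pos le_rfl).trans hder
      · exact if_neg h.not_ge
    have hdc : ContinuousOn d (Icc a c) := by
      rw [← Icc_union_Icc_eq_Icc hab.le hbc.le]
      exact (hu'.congr hdu).union_of_isClosed (hv'.congr hdv) isClosed_Icc isClosed_Icc
    -- away from the closure of the set, having a given derivative within it is vacuous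
    have h1 : ∀ t, HasDerivWithinAt f (d t) (Icc a b) t := by
      intro t
      by_cases ht : t ∈ Icc a b
      · rw [hdu ht]
        exact (hu t ht).congr (hfu_Icc hval) (hfu_Icc hval ht)
      · exact HasFDerivWithinAt.of_notMem_closure (by rwa [closure_Icc])
    have h2 : ∀ t < c, HasDerivWithinAt f (d t) (Ico b c) t := by
      intro t htc
      by_cases ht : t ∈ Ico b c
      · rw [hdv (Ico_subset_Icc_self ht)]
        exact ((hv t (Ico_subset_Icc_self ht)).mono Ico_subset_Icc_self).congr hfv (hfv ht)
      · refine HasFDerivWithinAt.of_notMem_closure ?_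
        rw [closure_Ico hbc.ne]
        exact fun h => ht ⟨h.1, htc⟩
    have h3 : ∀ t ∈ Ioo a c, HasDerivAt f (d t) t := by
      intro t ht
      refine ((h1 t).union (h2 t ht.2)).hasDerivAt ?_
      rw [Icc_union_Ico_eq_Ico hab.le hbc]
      exact Ico_mem_nhds ht.1 ht.2
    have h01 : (1 : WithTop ℕ∞) = 0 + 1 := by norm_num
    rw [h01, contDiffOn_succ_iff_deriv_of_isOpen isOpen_Ioo]
    refine ⟨fun t ht => (h3 t ht).differentiableAt.differentiableWithinAt, by simp, ?_⟩
    rw [contDiffOn_zero]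
    exact (hdc.mono Ioo_subset_Icc_self).congr fun t ht => (h3 t ht).deriv

/-! ### Coordinates and rotations -/

@[simp] lemma vec3_zero (a b c : ℝ) : vec3 a b c 0 = a := rfl
@[simp] lemma vec3_one (a b c : ℝ) : vec3 a b c 1 = b := rfl
@[simp] lemma vec3_two (a b c : ℝ) : vec3 a b c 2 = c := rfl

lemma E3_ext_iff (x y : E3) : x = y ↔ x 0 = y 0 ∧ x 1 = y 1 ∧ x 2 = y 2 := by
  constructor
  · rintro rfl
    simp
  · rintro ⟨h0, h1, h2⟩
    ext i
    fin_cases i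
    exacts [h0, h1, h2]

/-- The rotation `Rot i` as a continuous linear map. -/
def rotL (i : Fin 3) : E3 →L[ℝ] E3 :=
  LinearMap.toContinuousLinearMap
    { toFun := Rot i
      map_add' := by
        intro x y
        rw [E3_ext_iff]
        fin_cases i <;> simp [Rot] <;> constructor <;> ring
      map_smul' := by
        intro r x
        rw [E3_ext_iff]
        fin_cases i <;> simp [Rot] }

lemma rotL_apply (i : Fin 3) (x : E3) : rotL i x = Rot i x := rfl

lemma exists_smul_e3_iff (x : E3) : (∃ c : ℝ, x = c • e3) ↔ x 0 = 0 ∧ x 1 = 0 := by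
  simp [E3_ext_iff, e3]

lemma exists_smul_e1_iff (x : E3) : (∃ c : ℝ, x = c • e1) ↔ x 1 = 0 ∧ x 2 = 0 := by
  simp [E3_ext_iff, e1]

lemma mem_span_e1_e2_iff (x : E3) : x ∈ Submodule.span ℝ ({e1, e2} : Set E3) ↔ x 2 = 0 := by
  simp [Submodule.mem_span_pair, E3_ext_iff, e1, e2, eq_comm]

lemma mem_span_e2_e3_iff (x : E3) : x ∈ Submodule.span ℝ ({e2, e3} : Set E3) ↔ x 0 = 0 := by
  simp [Submodule.mem_span_pair, E3_ext_iff, e2, e3, eq_comm]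

/-! ### The pieces of the glued curve -/

/-- The curve `t ↦ L (α (σ t + c))`; every piece of the glued curve has this form, with `σ = ±1`. -/
def piece (α : ℝ → E3) (L : E3 →L[ℝ] E3) (σ c : ℝ) (t : ℝ) : E3 := L (α (σ * t + c))

/-- The derivative of `piece α L σ c`, where `D` stands for the derivative of `α`. -/
def pieceDeriv (D : ℝ → E3) (L : E3 →L[ℝ] E3) (σ c : ℝ) (t : ℝ) : E3 := σ • L (D (σ * t + c))

lemma piece_hasDerivWithinAt {α D : ℝ → E3} {I J : Set ℝ}
    (hα : ∀ t ∈ I, HasDerivWithinAt α (D t) I t) (L : E3 →L[ℝ] E3) {σ c : ℝ}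
    (hm : MapsTo (fun t => σ * t + c) J I) :
    ∀ t ∈ J, HasDerivWithinAt (piece α L σ c) (pieceDeriv D L σ c t) J t := by
  intro t ht
  have h1 : HasDerivWithinAt (fun t => σ * t + c) σ J t := by
    simpa using (((hasDerivAt_id t).const_mul σ).add_const c).hasDerivWithinAt
  have h2 := (hα _ (hm ht)).scomp t h1 hm
  have h3 := L.hasFDerivAt.comp_hasDerivWithinAt t h2
  rw [map_smul] at h3
  exact h3

lemma pieceDeriv_continuousOn {D : ℝ → E3} {I J : Set ℝ} (hD : ContinuousOn D I)
    (L : E3 →L[ℝ] E3) {σ c : ℝ} (hm : MapsTo (fun t => σ * t + c) J I) :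
    ContinuousOn (pieceDeriv D L σ c) J := by
  have h : ContinuousOn (fun t => D (σ * t + c)) J := hD.comp (by fun_prop) hm
  exact (L.continuous.comp_continuousOn h).const_smul σ

lemma glue_periodic {ℓ : ℝ} (hℓ : 0 < ℓ) (α : ℝ → E3) : Function.Periodic (glue ℓ α) ℓ := by
  intro t
  have h1 : (t + ℓ) / ℓ = t / ℓ + 1 := by field_simp
  have h2 : t + ℓ - ℓ * (⌊(t + ℓ) / ℓ⌋ : ℝ) = t - ℓ * (⌊t / ℓ⌋ : ℝ) := by
    rw [h1, Int.floor_add_one]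
    push_cast
    ring
  simp only [glue, h2]

lemma glue_of_mem {ℓ : ℝ} (hℓ : 0 < ℓ) (α : ℝ → E3) {t : ℝ} (ht : t ∈ Ico 0 ℓ) :
    glue ℓ α t = if t < ℓ / 4 then α t
      else if t < ℓ / 2 then Rot 0 (α (ℓ / 2 - t))
      else if t < 3 * ℓ / 4 then Rot 1 (α (t - ℓ / 2))
      else Rot 2 (α (ℓ - t)) := by
  have h : ⌊t / ℓ⌋ = 0 := by
    rw [Int.floor_eq_zero_iff]
    exact ⟨div_nonneg ht.1 hℓ.le, (div_lt_one hℓ).2 ht.2⟩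
  simp [glue, h, psi]

lemma glue_eqOn_zero {ℓ : ℝ} (hℓ : 0 < ℓ) (α : ℝ → E3) :
    EqOn (glue ℓ α) (piece α (.id ℝ E3) 1 0) (Ico 0 (ℓ / 4)) := by
  intro t ht
  rw [glue_of_mem hℓ α ⟨ht.1, by linarith [ht.2]⟩, if_pos ht.2]
  simp [piece]

lemma glue_eqOn_one {ℓ : ℝ} (hℓ : 0 < ℓ) (α : ℝ → E3) :
    EqOn (glue ℓ α) (piece α (rotL 0) (-1) (ℓ / 2)) (Ico (ℓ / 4) (ℓ / 2)) := by
  intro t ht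
  rw [glue_of_mem hℓ α ⟨by linarith [ht.1], by linarith [ht.2]⟩, if_neg ht.1.not_gt, if_pos ht.2]
  rw [piece, rotL_apply]
  congr 2
  ring

lemma glue_eqOn_two {ℓ : ℝ} (hℓ : 0 < ℓ) (α : ℝ → E3) :
    EqOn (glue ℓ α) (piece α (rotL 1) 1 (-(ℓ / 2))) (Ico (ℓ / 2) (3 * ℓ / 4)) := by
  intro t ht
  rw [glue_of_mem hℓ α ⟨by linarith [ht.1], by linarith [ht.2]⟩,
    if_neg (by linarith [ht.1]), if_neg ht.1.not_gt, if_pos ht.2]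
  rw [piece, rotL_apply]
  congr 2
  ring

lemma glue_eqOn_three {ℓ : ℝ} (hℓ : 0 < ℓ) (α : ℝ → E3) :
    EqOn (glue ℓ α) (piece α (rotL 2) (-1) ℓ) (Ico (3 * ℓ / 4) ℓ) := by
  intro t ht
  rw [glue_of_mem hℓ α ⟨by linarith [ht.1], by linarith [ht.2]⟩,
    if_neg (by linarith [ht.1]), if_neg (by linarith [ht.1]), if_neg ht.1.not_gt]
  rw [piece, rotL_apply]
  congr 2
  ring

lemma glue_eqOn_four {ℓ : ℝ} (hℓ : 0 < ℓ) (α : ℝ → E3) :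
    EqOn (glue ℓ α) (piece α (.id ℝ E3) 1 (-ℓ)) (Ico ℓ (5 * ℓ / 4)) := by
  intro t ht
  rw [← (glue_periodic hℓ α).sub_eq, glue_eqOn_zero hℓ α ⟨by linarith [ht.1], by linarith [ht.2]⟩]
  simp [piece, sub_eq_add_neg]

/-- By periodicity, smoothness of the glued curve may be tested on the four open intervals
around the junctions `ℓ/4`, `ℓ/2`, `3ℓ/4` and `ℓ`, which cover the period `(0, ℓ]`. -/
lemma glue_contDiff_iff {ℓ : ℝ} (hℓ : 0 < ℓ) (α : ℝ → E3) :
    ContDiff ℝ 1 (glue ℓ α) ↔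
      ContDiffOn ℝ 1 (glue ℓ α) (Ioo 0 (ℓ / 2)) ∧
      ContDiffOn ℝ 1 (glue ℓ α) (Ioo (ℓ / 4) (3 * ℓ / 4)) ∧
      ContDiffOn ℝ 1 (glue ℓ α) (Ioo (ℓ / 2) ℓ) ∧
      ContDiffOn ℝ 1 (glue ℓ α) (Ioo (3 * ℓ / 4) (5 * ℓ / 4)) := by
  refine ⟨fun h => ⟨h.contDiffOn, h.contDiffOn, h.contDiffOn, h.contDiffOn⟩, ?_⟩
  rintro ⟨h1, h2, h3, h4⟩
  have key : ∀ s ∈ Ioc 0 ℓ, ContDiffAt ℝ 1 (glue ℓ α) s := by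
    rintro s ⟨hs0, hsl⟩
    by_cases c1 : s < ℓ / 2
    · exact h1.contDiffAt (Ioo_mem_nhds hs0 c1)
    by_cases c2 : s < 3 * ℓ / 4
    · exact h2.contDiffAt (Ioo_mem_nhds (by linarith) c2)
    by_cases c3 : s < ℓ
    · exact h3.contDiffAt (Ioo_mem_nhds (by linarith) c3)
    · exact h4.contDiffAt (Ioo_mem_nhds (by linarith) (by linarith))
  rw [contDiff_iff_contDiffAt]
  intro t
  have hs : t - toIocDiv hℓ 0 t • ℓ ∈ Ioc 0 ℓ := by
    simpa using sub_toIocDiv_zsmul_mem_Ioc hℓ 0 t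
  have hcomp : ContDiffAt ℝ 1 (fun x => glue ℓ α (x - toIocDiv hℓ 0 t • ℓ)) t :=
    (key _ hs).comp t (contDiffAt_id.sub contDiffAt_const)
  simpa only [(glue_periodic hℓ α).sub_zsmul_eq] using hcomp

/-- For continuously differentiable `α : [0, ℓ/4] → ℝ³`, the `ℓ`-periodic
extension `g` of the glued map is continuously differentiable on all of `ℝ` if and only if
`α(0) ∈ ℝe₃`, `α(ℓ/4) ∈ ℝe₁`, `α'(0) ∈ span{e₁, e₂}` and `α'(ℓ/4) ∈ span{e₂, e₃}`
(with one-sided derivatives at the endpoints). -/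
theorem glued_curve_contDiff_iff (ℓ : ℝ) (hℓ : 0 < ℓ) (α : ℝ → E3)
    (hα : ContDiffOn ℝ 1 α (Icc 0 (ℓ / 4))) :
    ContDiff ℝ 1 (glue ℓ α) ↔
      ((∃ c : ℝ, α 0 = c • e3) ∧ (∃ c : ℝ, α (ℓ / 4) = c • e1) ∧
        derivWithin α (Icc 0 (ℓ / 4)) 0 ∈ Submodule.span ℝ ({e1, e2} : Set E3) ∧
        derivWithin α (Icc 0 (ℓ / 4)) (ℓ / 4) ∈ Submodule.span ℝ ({e2, e3} : Set E3)) := by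
  set I : Set ℝ := Icc 0 (ℓ / 4) with hI
  set D : ℝ → E3 := derivWithin α I with hDdef
  have hl4 : (0 : ℝ) < ℓ / 4 := by linarith
  have hα' : ∀ t ∈ I, HasDerivWithinAt α (D t) I t := fun t ht =>
    (hα.differentiableOn one_ne_zero t ht).hasDerivWithinAt
  have hD : ContinuousOn D I :=
    hα.continuousOn_derivWithin (uniqueDiffOn_Icc hl4) le_rfl
  have m0 : MapsTo (fun t => 1 * t + 0) (Icc 0 (ℓ / 4)) I :=
    fun t ht => ⟨by linarith [ht.1], by linarith [ht.2]⟩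
  have m1 : MapsTo (fun t => -1 * t + ℓ / 2) (Icc (ℓ / 4) (ℓ / 2)) I :=
    fun t ht => ⟨by linarith [ht.2], by linarith [ht.1]⟩
  have m2 : MapsTo (fun t => 1 * t + -(ℓ / 2)) (Icc (ℓ / 2) (3 * ℓ / 4)) I :=
    fun t ht => ⟨by linarith [ht.1], by linarith [ht.2]⟩
  have m3 : MapsTo (fun t => -1 * t + ℓ) (Icc (3 * ℓ / 4) ℓ) I :=
    fun t ht => ⟨by linarith [ht.2], by linarith [ht.1]⟩
  have m4 : MapsTo (fun t => 1 * t + -ℓ) (Icc ℓ (5 * ℓ / 4)) I :=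
    fun t ht => ⟨by linarith [ht.1], by linarith [ht.2]⟩
  rw [glue_contDiff_iff hℓ α,
    contDiffOn_glue_iff hl4 (by linarith) (glue_eqOn_zero hℓ α) (glue_eqOn_one hℓ α)
      (piece_hasDerivWithinAt hα' _ m0) (pieceDeriv_continuousOn hD _ m0)
      (piece_hasDerivWithinAt hα' _ m1) (pieceDeriv_continuousOn hD _ m1),
    contDiffOn_glue_iff (by linarith) (by linarith) (glue_eqOn_one hℓ α) (glue_eqOn_two hℓ α)
      (piece_hasDerivWithinAt hα' _ m1) (pieceDeriv_continuousOn hD _ m1)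
      (piece_hasDerivWithinAt hα' _ m2) (pieceDeriv_continuousOn hD _ m2),
    contDiffOn_glue_iff (by linarith) (by linarith) (glue_eqOn_two hℓ α) (glue_eqOn_three hℓ α)
      (piece_hasDerivWithinAt hα' _ m2) (pieceDeriv_continuousOn hD _ m2)
      (piece_hasDerivWithinAt hα' _ m3) (pieceDeriv_continuousOn hD _ m3),
    contDiffOn_glue_iff (by linarith) (by linarith) (glue_eqOn_three hℓ α) (glue_eqOn_four hℓ α)
      (piece_hasDerivWithinAt hα' _ m3) (pieceDeriv_continuousOn hD _ m3)
      (piece_hasDerivWithinAt hα' _ m4) (pieceDeriv_continuousOn hD _ m4),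
    exists_smul_e3_iff, exists_smul_e1_iff, mem_span_e1_e2_iff, mem_span_e2_e3_iff]
  -- the parameters of `α` at the four junctions
  have p1 : -1 * (ℓ / 4) + ℓ / 2 = ℓ / 4 := by ring
  have p2 : -1 * (ℓ / 2) + ℓ / 2 = 0 := by ring
  have p3 : 1 * (ℓ / 2) + -(ℓ / 2) = 0 := by ring
  have p4 : 1 * (3 * ℓ / 4) + -(ℓ / 2) = ℓ / 4 := by ring
  have p5 : -1 * (3 * ℓ / 4) + ℓ = ℓ / 4 := by ring
  have p6 : -1 * ℓ + ℓ = 0 := by ring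
  have p7 : 1 * ℓ + -ℓ = 0 := by ring
  have p0 : 1 * (ℓ / 4) + 0 = ℓ / 4 := by ring
  simp only [piece, pieceDeriv, p0, p1, p2, p3, p4, p5, p6, p7, rotL_apply, E3_ext_iff]
  simp [Rot]
  constructor
  · rintro ⟨⟨⟨a1, a2⟩, a3⟩, ⟨⟨a4, a5⟩, a6⟩, -⟩
    refine ⟨⟨?_, ?_⟩, ⟨?_, ?_⟩, ?_, ?_⟩ <;> linarith
  · rintro ⟨⟨a1, a2⟩, ⟨a3, a4⟩, a5, a6⟩
    simp [a1, a2, a3, a4, a5, a6]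
end
end

section
/- Let ℓ > 0 and let α : [0, ℓ/4] → ℝ³ be continuous with α(0) ∈ ℝe₃ and α(ℓ/4) ∈ ℝe₁. Then the ℓ-periodic extension g of the glued map is D₂-symmetric, i.e. Rᵢ(g(ψᵢ^ℓ(t))) = g(t) for all t ∈ ℝ and i = 1, 2, 3. -/
/-!
The rotations `R₁, R₂, R₃` together with the identity form a Klein four-group. The boundary
conditions say that `α 0` is fixed by `R₃` and `α (ℓ/4)` by `R₁`, so neighbouring pieces of the
glued map agree at their common endpoint. Hence the four formulas defining `g` hold on the *closed*
quarter periods, and modulo `ℓ` (`glue_quarter_zero`, ..., `glue_quarter_three`). Each `ψᵢ` permutes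
these closed quarters modulo `ℓ`, and the symmetry on each quarter is then one identity in the
Klein four-group. The closed quarters are needed because `ψ₁` and `ψ₃` reverse orientation and so
do not preserve the half-open quarters of the definition.
-/

noncomputable section

open Real Set

lemma rot_zero_zero (x : E3) : Rot 0 (Rot 0 x) = x := by
  ext k; fin_cases k <;> simp [Rot, vec3]

lemma rot_zero_one (x : E3) : Rot 0 (Rot 1 x) = Rot 2 x := by
  ext k; fin_cases k <;> simp [Rot, vec3]

lemma rot_zero_two (x : E3) : Rot 0 (Rot 2 x) = Rot 1 x := by
  ext k; fin_cases k <;> simp [Rot, vec3]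

lemma rot_one_zero (x : E3) : Rot 1 (Rot 0 x) = Rot 2 x := by
  ext k; fin_cases k <;> simp [Rot, vec3]

lemma rot_one_one (x : E3) : Rot 1 (Rot 1 x) = x := by
  ext k; fin_cases k <;> simp [Rot, vec3]

lemma rot_one_two (x : E3) : Rot 1 (Rot 2 x) = Rot 0 x := by
  ext k; fin_cases k <;> simp [Rot, vec3]

lemma rot_two_zero (x : E3) : Rot 2 (Rot 0 x) = Rot 1 x := by
  ext k; fin_cases k <;> simp [Rot, vec3]

lemma rot_two_one (x : E3) : Rot 2 (Rot 1 x) = Rot 0 x := by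
  ext k; fin_cases k <;> simp [Rot, vec3]

lemma rot_two_two (x : E3) : Rot 2 (Rot 2 x) = x := by
  ext k; fin_cases k <;> simp [Rot, vec3]

lemma rot_zero_e1 (c : ℝ) : Rot 0 (c • e1) = c • e1 := by
  ext k; fin_cases k <;> simp [Rot, vec3, e1]

lemma rot_two_e3 (c : ℝ) : Rot 2 (c • e3) = c • e3 := by
  ext k; fin_cases k <;> simp [Rot, vec3, e3]

/-- The rule defining `glue` may be evaluated at any representative of `t` in `[0, ℓ)`. -/
lemma glue_eq {ℓ : ℝ} (hℓ : 0 < ℓ) {α : ℝ → E3} {t : ℝ} {n : ℤ}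
    (ht0 : 0 ≤ t - ℓ * n) (ht1 : t - ℓ * n < ℓ) :
    glue ℓ α t =
      if t - ℓ * n < ℓ / 4 then α (t - ℓ * n)
      else if t - ℓ * n < ℓ / 2 then Rot 0 (α (ℓ / 2 - (t - ℓ * n)))
      else if t - ℓ * n < 3 * ℓ / 4 then Rot 1 (α (t - ℓ * n - ℓ / 2))
      else Rot 2 (α (ℓ - (t - ℓ * n))) := by
  have hfloor : ⌊t / ℓ⌋ = n := by
    rw [Int.floor_eq_iff, le_div_iff₀ hℓ, div_lt_iff₀ hℓ]
    constructor <;> linarith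
  simp only [glue, hfloor]
  rfl

lemma glue_quarter_zero {ℓ : ℝ} (hℓ : 0 < ℓ) {α : ℝ → E3} (h1 : ∃ c : ℝ, α (ℓ / 4) = c • e1)
    {t : ℝ} {n : ℤ} (ha : 0 ≤ t - ℓ * n) (hb : t - ℓ * n ≤ ℓ / 4) :
    glue ℓ α t = α (t - ℓ * n) := by
  obtain ⟨c, hc⟩ := h1
  rw [glue_eq hℓ ha (by linarith)]
  rcases hb.lt_or_eq with h | h
  · rw [if_pos h]
  · rw [h, if_neg (lt_irrefl _), if_pos (by linarith), show ℓ / 2 - ℓ / 4 = ℓ / 4 by ring, hc,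
      rot_zero_e1]

lemma glue_quarter_one {ℓ : ℝ} (hℓ : 0 < ℓ) {α : ℝ → E3} (h0 : ∃ c : ℝ, α 0 = c • e3)
    {t : ℝ} {n : ℤ} (ha : ℓ / 4 ≤ t - ℓ * n) (hb : t - ℓ * n ≤ ℓ / 2) :
    glue ℓ α t = Rot 0 (α (ℓ / 2 - (t - ℓ * n))) := by
  obtain ⟨c, hc⟩ := h0
  rw [glue_eq hℓ (by linarith) (by linarith), if_neg ha.not_gt]
  rcases hb.lt_or_eq with h | h
  · rw [if_pos h]
  · -- `R₂ = R₁ R₃`, and `R₃` fixes `α 0`.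
    rw [h, if_neg (lt_irrefl _), if_pos (by linarith), sub_self, ← rot_zero_two, hc, rot_two_e3]

lemma glue_quarter_two {ℓ : ℝ} (hℓ : 0 < ℓ) {α : ℝ → E3} (h1 : ∃ c : ℝ, α (ℓ / 4) = c • e1)
    {t : ℝ} {n : ℤ} (ha : ℓ / 2 ≤ t - ℓ * n) (hb : t - ℓ * n ≤ 3 * ℓ / 4) :
    glue ℓ α t = Rot 1 (α (t - ℓ * n - ℓ / 2)) := by
  obtain ⟨c, hc⟩ := h1
  rw [glue_eq hℓ (by linarith) (by linarith), if_neg (by linarith), if_neg ha.not_gt]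
  rcases hb.lt_or_eq with h | h
  · rw [if_pos h]
  · -- `R₃ = R₂ R₁`, and `R₁` fixes `α (ℓ/4)`.
    rw [h, if_neg (lt_irrefl _), show ℓ - 3 * ℓ / 4 = ℓ / 4 by ring,
      show 3 * ℓ / 4 - ℓ / 2 = ℓ / 4 by ring, ← rot_one_zero, hc, rot_zero_e1]

lemma glue_quarter_three {ℓ : ℝ} (hℓ : 0 < ℓ) {α : ℝ → E3} (h0 : ∃ c : ℝ, α 0 = c • e3)
    {t : ℝ} {n : ℤ} (ha : 3 * ℓ / 4 ≤ t - ℓ * n) (hb : t - ℓ * n ≤ ℓ) :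
    glue ℓ α t = Rot 2 (α (ℓ - (t - ℓ * n))) := by
  obtain ⟨c, hc⟩ := h0
  rcases hb.lt_or_eq with h | h
  · rw [glue_eq hℓ (by linarith) h, if_neg (by linarith), if_neg (by linarith), if_neg ha.not_gt]
  · -- The right endpoint is the left endpoint of the next period.
    have h' : t - ℓ * ((n + 1 : ℤ) : ℝ) = 0 := by push_cast; linarith
    rw [glue_eq hℓ (n := n + 1) h'.ge (by linarith), h', if_pos (by linarith), h, sub_self, hc,
      rot_two_e3]

/-- If `α : [0, ℓ/4] → ℝ³` is continuous with `α(0) ∈ ℝe₃` and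
`α(ℓ/4) ∈ ℝe₁`, then the `ℓ`-periodic extension `g` of the glued map is D₂-symmetric,
i.e. `Rᵢ(g(ψᵢ^ℓ(t))) = g(t)` for all `t ∈ ℝ` and `i = 1, 2, 3`. -/
theorem glued_curve_dihedralSymmetric (ℓ : ℝ) (hℓ : 0 < ℓ) (α : ℝ → E3)
    (hcont : ContinuousOn α (Icc 0 (ℓ / 4)))
    (h0 : ∃ c : ℝ, α 0 = c • e3) (h1 : ∃ c : ℝ, α (ℓ / 4) = c • e1) :
    DihedralSymmetric ℓ (glue ℓ α) := by
  have hrep : ∀ t : ℝ, ∃ n : ℤ, 0 ≤ t - ℓ * n ∧ t - ℓ * n < ℓ := by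
    intro t
    refine ⟨⌊t / ℓ⌋, ?_, ?_⟩
    · have := mul_le_mul_of_nonneg_left (Int.floor_le (t / ℓ)) hℓ.le
      rw [mul_div_cancel₀ t hℓ.ne'] at this
      linarith
    · have := mul_lt_mul_of_pos_left (Int.lt_floor_add_one (t / ℓ)) hℓ
      rw [mul_div_cancel₀ t hℓ.ne'] at this
      linarith
  have Q0 := fun t n => glue_quarter_zero (t := t) (n := n) hℓ h1
  have Q1 := fun t n => glue_quarter_one (t := t) (n := n) hℓ h0
  have Q2 := fun t n => glue_quarter_two (t := t) (n := n) hℓ h1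
  have Q3 := fun t n => glue_quarter_three (t := t) (n := n) hℓ h0
  intro i t
  obtain ⟨n, hn0, hn1⟩ := hrep t
  have hq : t - ℓ * n ≤ ℓ / 4 ∨ (ℓ / 4 ≤ t - ℓ * n ∧ t - ℓ * n ≤ ℓ / 2) ∨
      (ℓ / 2 ≤ t - ℓ * n ∧ t - ℓ * n ≤ 3 * ℓ / 4) ∨ 3 * ℓ / 4 ≤ t - ℓ * n := by
    grind
  fin_cases i
  · change Rot 0 (glue ℓ α (ℓ / 2 - t)) = _
    rcases hq with h | ⟨h, h'⟩ | ⟨h, h'⟩ | h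
    · rw [Q0 t n hn0 h, Q1 _ (-n) (by push_cast; linarith) (by push_cast; linarith), rot_zero_zero]
      congr 1; push_cast; ring
    · rw [Q1 t n h h', Q0 _ (-n) (by push_cast; linarith) (by push_cast; linarith)]
      congr 2; push_cast; ring
    · rw [Q2 t n h h', Q3 _ (-n - 1) (by push_cast; linarith) (by push_cast; linarith),
        rot_zero_two]
      congr 2; push_cast; ring
    · rw [Q3 t n h hn1.le, Q2 _ (-n - 1) (by push_cast; linarith) (by push_cast; linarith),
        rot_zero_one]
      congr 2; push_cast; ring
  · change Rot 1 (glue ℓ α (t - ℓ / 2)) = _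
    rcases hq with h | ⟨h, h'⟩ | ⟨h, h'⟩ | h
    · rw [Q0 t n hn0 h, Q2 _ (n - 1) (by push_cast; linarith) (by push_cast; linarith), rot_one_one]
      congr 1; push_cast; ring
    · rw [Q1 t n h h', Q3 _ (n - 1) (by push_cast; linarith) (by push_cast; linarith), rot_one_two]
      congr 2; push_cast; ring
    · rw [Q2 t n h h', Q0 _ n (by linarith) (by linarith)]
      congr 2; ring
    · rw [Q3 t n h hn1.le, Q1 _ n (by linarith) (by linarith), rot_one_zero]
      congr 2; ring
  · change Rot 2 (glue ℓ α (ℓ - t)) = _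
    rcases hq with h | ⟨h, h'⟩ | ⟨h, h'⟩ | h
    · rw [Q0 t n hn0 h, Q3 _ (-n) (by push_cast; linarith) (by push_cast; linarith), rot_two_two]
      congr 1; push_cast; ring
    · rw [Q1 t n h h', Q2 _ (-n) (by push_cast; linarith) (by push_cast; linarith), rot_two_one]
      congr 2; push_cast; ring
    · rw [Q2 t n h h', Q1 _ (-n) (by push_cast; linarith) (by push_cast; linarith), rot_two_zero]
      congr 2; push_cast; ring
    · rw [Q3 t n h hn1.le, Q0 _ (-n) (by push_cast; linarith) (by push_cast; linarith)]
      congr 2; push_cast; ring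
end
end

section
/- Symmetry of the arclength parametrization: let ℓ > 0 and let γ : ℝ → ℝ³ be a continuous ℓ-periodic D₂-symmetric curve whose length over one period L := ℒ(γ|[0,ℓ]) is finite and positive. Let s : ℝ → ℝ be the signed arclength function of γ based at 0 (so s(t) = ℒ(γ|[0,t]) for t ≥ 0, s(t) = −ℒ(γ|[t,0]) for t < 0; it satisfies s(t+ℓ) = s(t) + L). If Γ : ℝ → ℝ³ is continuous, L-periodic, and satisfies Γ(s(t)) = γ(t) for all t ∈ ℝ, then Γ is D₂-symmetric with period L, i.e. Rᵢ(Γ(ψᵢ^L(u))) = Γ(u) for all u ∈ ℝ and i = 1, 2, 3. -/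
/-!
The symmetries of `γ` pass to its signed arclength. Each `Rᵢ` is an isometry, so the parameter
changes `ψᵢ` preserve the length of the arcs of `γ` (`dist_psi`). A translation therefore preserves
the signed variation and a reflection reverses its sign (`variation_translate`,
`variation_reflect`). The half-period translation `ψ₂` splits a period into two arcs of
equal length, so `s (ℓ/2) = L/2`, and additivity of the variation yields the conjugation
`s ∘ ψᵢ^ℓ = ψᵢ^L ∘ s` (`arclength_psi`). Hence `Γ` satisfies the required identities at every point
`u = s t`. These are all the reals: `s` is continuous because `γ` is, and it is unbounded in both
directions because `s (t + ℓ) = s t + L` with `L > 0` (`arclength_surjective`).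
-/


noncomputable section

open Real Set

open Filter Topology

lemma Rot_edist (i : Fin 3) (x y : E3) : edist (Rot i x) (Rot i y) = edist x y := by
  rw [edist_dist, edist_dist]
  congr 1
  rw [EuclideanSpace.dist_eq, EuclideanSpace.dist_eq]
  congr 1
  fin_cases i <;>
    simp [Rot, vec3, Fin.sum_univ_three, Real.dist_eq, sq_abs] <;> ring

/-- The symmetry identity makes every `ψᵢ` preserve distances between points of the curve. -/
lemma dist_psi {ℓ : ℝ} {γ : ℝ → E3} (hsym : DihedralSymmetric ℓ γ) (i : Fin 3) (x y : ℝ) :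
    edist (γ (psi ℓ i x)) (γ (psi ℓ i y)) = edist (γ x) (γ y) := by
  rw [← Rot_edist i, hsym, hsym]

lemma eVariationOn_congr_edist {f g : ℝ → E3} (h : ∀ x y, edist (f x) (f y) = edist (g x) (g y))
    (S : Set ℝ) : eVariationOn f S = eVariationOn g S := by
  simp only [eVariationOn, h]

/-- A translation of the parameter that preserves distances along the curve preserves the
signed variation. -/
lemma variation_translate {γ : ℝ → E3} {c : ℝ}
    (h : ∀ x y, edist (γ (x + c)) (γ (y + c)) = edist (γ x) (γ y)) (a b : ℝ) :
    variationOnFromTo γ univ (a + c) (b + c) = variationOnFromTo γ univ a b := by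
  have key (a b : ℝ) : eVariationOn γ (Icc (a + c) (b + c)) = eVariationOn γ (Icc a b) := by
    rw [← image_add_const_Icc, ← eVariationOn.comp_eq_of_monotoneOn γ (fun x => x + c)
      (fun x _ y _ hxy => by simpa using hxy)]
    exact eVariationOn_congr_edist h _
  simp only [variationOnFromTo, univ_inter, key, add_le_add_iff_right]

/-- A reflection of the parameter that preserves distances along the curve reverses the sign of
the signed variation. -/
lemma variation_reflect {γ : ℝ → E3} {c : ℝ}
    (h : ∀ x y, edist (γ (c - x)) (γ (c - y)) = edist (γ x) (γ y)) (a b : ℝ) :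
    variationOnFromTo γ univ (c - a) (c - b) = -variationOnFromTo γ univ a b := by
  have key (a b : ℝ) : eVariationOn γ (Icc (c - b) (c - a)) = eVariationOn γ (Icc a b) := by
    rw [← image_const_sub_Icc, ← eVariationOn.comp_eq_of_antitoneOn γ (fun x => c - x)
      (fun x _ y _ hxy => sub_le_sub_left hxy c)]
    exact eVariationOn_congr_edist h _
  rcases le_total a b with hab | hab
  · rw [variationOnFromTo.eq_of_ge _ _ (by linarith), variationOnFromTo.eq_of_le _ _ hab,
      univ_inter, univ_inter, key]
  · rw [variationOnFromTo.eq_of_le _ _ (by linarith), variationOnFromTo.eq_of_ge _ _ hab,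
      univ_inter, univ_inter, key, neg_neg]

/-- A periodic curve of finite length over one period has locally bounded variation: any compact
interval is covered by finitely many translates of the period. -/
lemma locallyBoundedVariationOn_of_periodic {ℓ : ℝ} (hℓ : 0 < ℓ) {γ : ℝ → E3}
    (hper : ∀ t, γ (t + ℓ) = γ t) (hfin : eVariationOn γ (Icc 0 ℓ) ≠ ⊤) :
    LocallyBoundedVariationOn γ univ := by
  have piece (k : ℤ) : eVariationOn γ (Icc (k * ℓ) ((k + 1) * ℓ)) ≠ ⊤ := by
    have hcomp : γ ∘ (fun t => t - k * ℓ) = γ :=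
      funext fun t => Function.Periodic.sub_int_mul_eq (f := γ) (c := ℓ) hper k
    refine ne_top_of_le_ne_top hfin ?_
    conv_lhs => rw [← hcomp]
    refine eVariationOn.comp_le_of_monotoneOn γ _ (fun x _ y _ hxy => by simpa using hxy) ?_
    intro t ht
    constructor <;> linarith [ht.1, ht.2]
  have big (n : ℕ) : eVariationOn γ (Icc (-(n * ℓ)) (n * ℓ)) ≠ ⊤ := by
    induction n with
    | zero => simp [eVariationOn.subsingleton]
    | succ n ih =>
      have hn : 0 ≤ n * ℓ := by positivity
      have h1 := eVariationOn.Icc_add_Icc γ (s := univ) (a := -((n + 1 : ℕ) * ℓ))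
        (b := -(n * ℓ)) (c := n * ℓ) (by push_cast; linarith) (by linarith) (mem_univ _)
      have h2 := eVariationOn.Icc_add_Icc γ (s := univ) (a := -((n + 1 : ℕ) * ℓ))
        (b := n * ℓ) (c := (n + 1 : ℕ) * ℓ) (by push_cast; linarith) (by push_cast; linarith)
        (mem_univ _)
      simp only [univ_inter] at h1 h2
      rw [← h2, ← h1]
      have p1 := piece (-(n + 1 : ℤ))
      have p2 := piece n
      push_cast at p1 p2 ⊢
      rw [show (-((n : ℝ) + 1)) * ℓ = -((n + 1) * ℓ) by ring,
        show (-((n : ℝ) + 1) + 1) * ℓ = -(n * ℓ) by ring] at p1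
      exact ENNReal.add_ne_top.2 ⟨ENNReal.add_ne_top.2 ⟨p1, ih⟩, p2⟩
  intro a b _ _
  obtain ⟨n, hn⟩ := exists_nat_ge (max |a| |b| / ℓ)
  rw [div_le_iff₀ hℓ] at hn
  have ha := (le_max_left _ _).trans hn
  have hb := (le_max_right _ _).trans hn
  refine ne_top_of_le_ne_top (big n) (eVariationOn.mono _ ?_)
  rintro t ⟨-, ht⟩
  exact ⟨(abs_le.1 ha).1.trans ht.1, ht.2.trans (abs_le.1 hb).2⟩

lemma continuous_arclength {γ : ℝ → E3} (hc : Continuous γ)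
    (hbv : LocallyBoundedVariationOn γ univ) (a : ℝ) :
    Continuous (variationOnFromTo γ univ a) := by
  rw [continuous_iff_continuousAt]
  intro b
  rw [continuousAt_iff_continuous_left'_right']
  constructor
  · have h := variationOnFromTo.tendsto_left (mem_univ a) (mem_univ b) hbv
      (hc.continuousAt.tendsto.mono_left nhdsWithin_le_nhds)
    simpa [ContinuousWithinAt] using h
  · have h := variationOnFromTo.tendsto_right (mem_univ a) (mem_univ b) hbv
      (hc.continuousAt.tendsto.mono_left nhdsWithin_le_nhds)
    simpa [ContinuousWithinAt] using h

/-- The arclength function is onto: it is continuous, monotone, and grows by `L > 0` over each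
period. -/
lemma arclength_surjective {ℓ L : ℝ} {γ : ℝ → E3} (hc : Continuous γ)
    (hbv : LocallyBoundedVariationOn γ univ) (hLpos : 0 < L)
    (hper : ∀ t, γ (t + ℓ) = γ t) (hL : variationOnFromTo γ univ 0 ℓ = L) :
    Function.Surjective (variationOnFromTo γ univ 0) := by
  have hstep (t : ℝ) : variationOnFromTo γ univ 0 (t + ℓ) = variationOnFromTo γ univ 0 t + L := by
    have h := variation_translate (γ := γ) (c := ℓ) (fun x y => by rw [hper, hper]) 0 t
    rw [zero_add] at h
    rw [← variationOnFromTo.add hbv (mem_univ 0) (mem_univ ℓ) (mem_univ (t + ℓ)), h, hL, add_comm]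
  have hsteps (t : ℝ) (n : ℕ) :
      variationOnFromTo γ univ 0 (t + n * ℓ) = variationOnFromTo γ univ 0 t + n * L := by
    induction n with
    | zero => simp
    | succ n ih =>
      rw [show t + (n + 1 : ℕ) * ℓ = t + n * ℓ + ℓ by push_cast; ring, hstep, ih]
      push_cast
      ring
  have hmono : Monotone (variationOnFromTo γ univ 0) :=
    monotoneOn_univ.1 (variationOnFromTo.monotoneOn hbv (mem_univ 0))
  refine (continuous_arclength hc hbv 0).surjective
    (hmono.tendsto_atTop_atTop fun b => ?_) (hmono.tendsto_atBot_atBot fun b => ?_)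
  · obtain ⟨n, hn⟩ := exists_nat_ge (b / L)
    rw [div_le_iff₀ hLpos] at hn
    refine ⟨0 + n * ℓ, ?_⟩
    rw [hsteps, variationOnFromTo.self]
    linarith
  · obtain ⟨n, hn⟩ := exists_nat_ge (-b / L)
    rw [div_le_iff₀ hLpos] at hn
    refine ⟨-(n * ℓ), ?_⟩
    have h := hsteps (-(n * ℓ)) n
    rw [neg_add_cancel, variationOnFromTo.self] at h
    linarith

/-- The arclength function conjugates the parameter symmetries of period `ℓ` to those of
period `L`. -/
lemma arclength_psi {ℓ L : ℝ} {γ : ℝ → E3} (hbv : LocallyBoundedVariationOn γ univ)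
    (hsym : DihedralSymmetric ℓ γ) (hL : variationOnFromTo γ univ 0 ℓ = L) (i : Fin 3) (t : ℝ) :
    variationOnFromTo γ univ 0 (psi ℓ i t) = psi L i (variationOnFromTo γ univ 0 t) := by
  have hadd (a b c : ℝ) := variationOnFromTo.add hbv (mem_univ a) (mem_univ b) (mem_univ c)
  have htrans (a b : ℝ) := variation_translate (γ := γ) (c := -(ℓ / 2))
    (fun x y => by simpa [psi, sub_eq_add_neg] using dist_psi hsym 1 x y) a b
  have half : variationOnFromTo γ univ 0 (ℓ / 2) = L / 2 := by
    have h1 := htrans (ℓ / 2) ℓ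
    rw [show ℓ / 2 + -(ℓ / 2) = 0 by ring, show ℓ + -(ℓ / 2) = ℓ / 2 by ring] at h1
    linarith [hadd 0 (ℓ / 2) ℓ]
  fin_cases i
  · have h := variation_reflect (γ := γ) (c := ℓ / 2)
      (fun x y => by simpa [psi] using dist_psi hsym 0 x y) 0 t
    rw [sub_zero] at h
    simp only [psi, Fin.zero_eta, Matrix.cons_val_zero]
    linarith [hadd 0 (ℓ / 2) (ℓ / 2 - t)]
  · have h := htrans (ℓ / 2) t
    rw [add_neg_cancel, ← sub_eq_add_neg] at h
    simp only [psi, Fin.mk_one, Matrix.cons_val_one, Matrix.cons_val_zero]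
    linarith [hadd 0 (ℓ / 2) t]
  · have h := variation_reflect (γ := γ) (c := ℓ)
      (fun x y => by simpa [psi] using dist_psi hsym 2 x y) 0 t
    rw [sub_zero] at h
    simp only [psi, Fin.reduceFinMk, Matrix.cons_val]
    linarith [hadd 0 ℓ (ℓ - t)]

/-- **Symmetry of the arclength parametrization.** Let `γ` be a continuous
`ℓ`-periodic D₂-symmetric curve of finite positive length `L` over one period, and let
`s` be its signed arclength function based at `0` (so `s(t) = ℒ(γ|[0,t])` for `t ≥ 0` and
`s(t) = -ℒ(γ|[t,0])` for `t < 0`). If `Γ` is continuous, `L`-periodic and satisfies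
`Γ(s(t)) = γ(t)` for all `t`, then `Γ` is D₂-symmetric with period `L`. -/
theorem arclength_parametrization_dihedralSymmetric (ℓ : ℝ) (hℓ : 0 < ℓ)
    (γ : ℝ → E3) (hc : Continuous γ) (hper : ∀ t, γ (t + ℓ) = γ t)
    (hsym : DihedralSymmetric ℓ γ)
    (L : ℝ) (hLpos : 0 < L)
    (hL : eVariationOn γ (Icc 0 ℓ) = ENNReal.ofReal L)
    (s : ℝ → ℝ) (hs : ∀ t, s t = variationOnFromTo γ univ 0 t)
    (Γ : ℝ → E3) (hΓc : Continuous Γ) (hΓper : ∀ u, Γ (u + L) = Γ u)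
    (hΓs : ∀ t, Γ (s t) = γ t) :
    DihedralSymmetric L Γ := by
  have hbv : LocallyBoundedVariationOn γ univ :=
    locallyBoundedVariationOn_of_periodic hℓ hper (by simp [hL])
  have hL' : variationOnFromTo γ univ 0 ℓ = L := by
    rw [variationOnFromTo.eq_of_le _ _ hℓ.le, univ_inter, hL, ENNReal.toReal_ofReal hLpos.le]
  intro i u
  obtain ⟨t, rfl⟩ := arclength_surjective hc hbv hLpos hper hL' u
  rw [← arclength_psi hbv hsym hL', ← hs, ← hs, hΓs, hΓs, hsym]
end
end

section
/- Optimal L∞-bound: let ℓ > 0 and let γ : ℝ → ℝ³ be a continuous ℓ-periodic curve whose length Λ over one period is finite and positive, and whose image K := γ(ℝ) has dihedral symmetry, i.e. Rᵢ(K) = K for i = 1, 2, 3. Then ‖γ(t)‖ ≤ Λ/4 for every t ∈ ℝ, i.e. the curve is contained in the closed ball of radius Λ/4 centered at the origin. -/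
/-!
Fix `p = γ t`. The four orbit points `p, R₁p, R₂p, R₃p` all lie on the closed curve `γ`, so the
length `Λ` is at least the perimeter of the (possibly degenerate) quadrilateral formed by them in
the order in which `γ` visits them (`cyclic_dist_le_eVariationOn`). Whatever that order is, two
consecutive sides are two of the three numbers `2√(b²+c²)`, `2√(a²+c²)`, `2√(a²+b²)`, where
`p = (a, b, c)`. The squares of any two of these sum to at least `4‖p‖²`, so two consecutive sides
have total length at least `2‖p‖` (`two_norm_le_dist_add_dist`), and the perimeter is at least
`4‖p‖`.
-/


noncomputable section

open Real Set

/-- The orbit of `p` under the dihedral group, listed as `p, R₁p, R₂p, R₃p`. -/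
def orbit4 (p : E3) : Fin 4 → E3 := ![p, Rot 0 p, Rot 1 p, Rot 2 p]

/-- A closed curve is at least as long as a closed quadrilateral inscribed in it. -/
lemma cyclic_dist_le_eVariationOn {X : Type*} [PseudoEMetricSpace X] {f : ℝ → X} {ℓ : ℝ}
    (hf : f ℓ = f 0) {a b c d : ℝ} (ha : 0 ≤ a) (hab : a ≤ b) (hbc : b ≤ c) (hcd : c ≤ d)
    (hd : d ≤ ℓ) :
    edist (f a) (f b) + edist (f b) (f c) + (edist (f c) (f d) + edist (f d) (f a))
      ≤ eVariationOn f (Icc 0 ℓ) := by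
  have side : ∀ {x y : ℝ}, x ≤ y → edist (f x) (f y) ≤ eVariationOn f (Icc x y) := fun h =>
    eVariationOn.edist_le f (left_mem_Icc.2 h) (right_mem_Icc.2 h)
  have split : ∀ {x y : ℝ}, 0 ≤ x → x ≤ y →
      eVariationOn f (Icc 0 x) + eVariationOn f (Icc x y) = eVariationOn f (Icc 0 y) := by
    intro x y hx hxy
    simpa using eVariationOn.Icc_add_Icc f (s := univ) hx hxy (mem_univ x)
  have hb := ha.trans hab
  have hc := hb.trans hbc
  have hd0 := hc.trans hcd
  rw [← split hd0 hd, ← split hc hcd, ← split hb hbc, ← split ha hab]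
  -- The closing side is dominated by the part of the curve from `d` through `ℓ ~ 0` to `a`.
  have close : edist (f d) (f a) ≤ eVariationOn f (Icc d ℓ) + eVariationOn f (Icc 0 a) := by
    refine (edist_triangle _ (f ℓ) _).trans (add_le_add (side hd) ?_)
    rw [hf]
    exact side ha
  calc _ ≤ eVariationOn f (Icc a b) + eVariationOn f (Icc b c) + (eVariationOn f (Icc c d)
          + (eVariationOn f (Icc d ℓ) + eVariationOn f (Icc 0 a))) := by
        gcongr <;> exact side (by assumption)
    _ = _ := by ring

lemma four_norm_sq_le (p : E3) {i j k : Fin 4} (hij : i ≠ j) (hjk : j ≠ k) (hik : i ≠ k) :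
    4 * ‖p‖ ^ 2 ≤ dist (orbit4 p i) (orbit4 p j) ^ 2 + dist (orbit4 p j) (orbit4 p k) ^ 2 := by
  simp only [dist_eq_norm, EuclideanSpace.real_norm_sq_eq, Fin.sum_univ_three]
  have h0 := sq_nonneg (p 0)
  have h1 := sq_nonneg (p 1)
  have h2 := sq_nonneg (p 2)
  fin_cases i <;> fin_cases j <;> first | exact absurd rfl hij | skip
  all_goals fin_cases k <;> first | exact absurd rfl hjk | exact absurd rfl hik | skip
  all_goals
    simp [orbit4, Rot, vec3]
    nlinarith

/-- Two consecutive sides of the orbit quadrilateral have total length at least `2‖p‖`. -/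
lemma two_norm_le_dist_add_dist (p : E3) {i j k : Fin 4} (hij : i ≠ j) (hjk : j ≠ k)
    (hik : i ≠ k) :
    2 * ‖p‖ ≤ dist (orbit4 p i) (orbit4 p j) + dist (orbit4 p j) (orbit4 p k) := by
  have h := four_norm_sq_le p hij hjk hik
  have hx := dist_nonneg (x := orbit4 p i) (y := orbit4 p j)
  have hy := dist_nonneg (x := orbit4 p j) (y := orbit4 p k)
  refine (sq_le_sq₀ (by positivity) (by positivity)).1 ?_
  nlinarith [mul_nonneg hx hy]

/-- **Optimal L∞-bound.** A continuous `ℓ`-periodic curve of finite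
positive length `Λ` over one period whose image is invariant under all three rotations
`R₁, R₂, R₃` is contained in the closed ball of radius `Λ/4` centered at the origin. -/
theorem dihedral_image_Linfty_bound (ℓ : ℝ) (hℓ : 0 < ℓ) (γ : ℝ → E3)
    (hc : Continuous γ) (hper : ∀ t, γ (t + ℓ) = γ t)
    (Λ : ℝ) (hΛpos : 0 < Λ)
    (hΛ : eVariationOn γ (Icc 0 ℓ) = ENNReal.ofReal Λ)
    (hK : ∀ i : Fin 3, Rot i '' Set.range γ = Set.range γ) :
    ∀ t : ℝ, ‖γ t‖ ≤ Λ / 4 := by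
  intro t
  -- The orbit of `γ t` lies on the curve, and is visited at times `τ i ∈ [0, ℓ)`.
  have hvisit : ∀ i : Fin 4, ∃ s ∈ Ico 0 ℓ, orbit4 (γ t) i = γ s := by
    intro i
    have hmem : orbit4 (γ t) i ∈ range γ := by
      have hR : ∀ k : Fin 3, Rot k (γ t) ∈ range γ := fun k =>
        hK k ▸ mem_image_of_mem _ (mem_range_self t)
      fin_cases i
      · exact mem_range_self t
      · exact hR 0
      · exact hR 1
      · exact hR 2
    obtain ⟨s, hs⟩ := hmem
    obtain ⟨s', hs', h⟩ := Function.Periodic.exists_mem_Ico₀ (f := γ) hper hℓ s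
    exact ⟨s', hs', hs.symm.trans h⟩
  choose τ hτ hγτ using hvisit
  -- `σ` lists the orbit points in the order of their visiting times.
  let σ := Tuple.sort τ
  have hmono : Monotone (τ ∘ σ) := Tuple.monotone_sort τ
  have hlen := cyclic_dist_le_eVariationOn (f := γ) (by simpa using hper 0) (hτ (σ 0)).1
    (hmono (show (0 : Fin 4) ≤ 1 by decide)) (hmono (show (1 : Fin 4) ≤ 2 by decide))
    (hmono (show (2 : Fin 4) ≤ 3 by decide)) (hτ (σ 3)).2.le
  simp only [Function.comp_apply, ← hγτ] at hlen
  rw [hΛ] at hlen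
  simp only [edist_dist] at hlen
  rw [← ENNReal.ofReal_add (by positivity) (by positivity),
    ← ENNReal.ofReal_add (by positivity) (by positivity),
    ← ENNReal.ofReal_add (by positivity) (by positivity),
    ENNReal.ofReal_le_ofReal_iff hΛpos.le] at hlen
  have hne : ∀ {i j : Fin 4}, i ≠ j → σ i ≠ σ j := fun h => σ.injective.ne h
  have h1 := two_norm_le_dist_add_dist (γ t) (hne (show (0 : Fin 4) ≠ 1 by decide))
    (hne (show (1 : Fin 4) ≠ 2 by decide)) (hne (show (0 : Fin 4) ≠ 2 by decide))
  have h2 := two_norm_le_dist_add_dist (γ t) (hne (show (2 : Fin 4) ≠ 3 by decide))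
    (hne (show (3 : Fin 4) ≠ 0 by decide)) (hne (show (2 : Fin 4) ≠ 0 by decide))
  linarith
end
end

section
/- The explicit tangential pair of coplanar circles tpc[π] : ℝ → ℝ³, defined as the 1-periodic extension of tpc(t) = (1/(4π))·(1 − cos(4πt), sin(4πt), 0) for t ∈ [0, 1/2) and tpc(t) = (1/(4π))·(−(1 − cos(4πt)), sin(4πt), 0) for t ∈ [1/2, 1), is continuously differentiable with Lipschitz continuous derivative, is parametrized by arclength (‖tpc'(t)‖ = 1 for all t), is D₂-symmetric, its second derivative exists at all t ∉ (1/2)ℤ with ‖tpc''(t)‖ = 4π there, and its image is the union of the two circles of radius 1/(4π) in the plane {x₃ = 0} centered at ±(1/(4π))e₁, which meet exactly at the origin. -/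
/-! The curve has the closed form
`tpcPi t = (1/(4π)) (2 sin(2πt) |sin(2πt)|, sin(4πt), 0)`,
because the choice of branch is the sign of `sin(2πt)` and `1 - cos(4πt) = 2 sin²(2πt)`
(`tpcPi_eq`). The function `x |x|` is continuously differentiable with derivative `2|x|`, so the
velocity is `(2 |sin(2πt)| cos(2πt), cos(4πt), 0)` (`hasDerivAt_tpcPi`). This is a Lipschitz unit
field, which is differentiable wherever `sin(2πt) ≠ 0`, that is, off `(1/2)ℤ`. The symmetries can be
read off from the closed form. For the image, a point of the circle on the positive side determines
the angle `4πt` modulo `2π`, hence `t` modulo `1/2`; the shift by `1/2` flips the sign of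
`sin(2πt)`, so one of the two choices lies on the right branch. The rotation about the second
axis exchanges the two circles. -/

noncomputable section

open Real Set

/-- The tangential pair of co-planar circles `tpc[π]`, defined as the `1`-periodic
extension of `t ↦ (1/(4π))·(1 - cos(4πt), sin(4πt), 0)` on `[0, 1/2)` and
`t ↦ (1/(4π))·(-(1 - cos(4πt)), sin(4πt), 0)` on `[1/2, 1)`. -/
def tpcPi (t : ℝ) : E3 :=
  let s := Int.fract t
  if s < 1 / 2 then
    (1 / (4 * π)) • vec3 (1 - Real.cos (4 * π * s)) (Real.sin (4 * π * s)) 0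
  else
    (1 / (4 * π)) • vec3 (-(1 - Real.cos (4 * π * s))) (Real.sin (4 * π * s)) 0

lemma E3_ext {x y : E3} (h0 : x 0 = y 0) (h1 : x 1 = y 1) (h2 : x 2 = y 2) : x = y := by
  ext i
  fin_cases i
  exacts [h0, h1, h2]

lemma vec3_eq_smul (a b : ℝ) : vec3 a b 0 = a • e1 + b • e2 := by
  apply E3_ext <;> simp [e1, e2]

lemma norm_vec3 (a b : ℝ) : ‖vec3 a b 0‖ = √(a ^ 2 + b ^ 2) := by
  rw [EuclideanSpace.norm_eq]
  simp [Fin.sum_univ_three]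

/-- The curve without case distinction: the branch sign is the sign of `sin (2πt)`. -/
lemma tpcPi_eq (t : ℝ) : tpcPi t =
    vec3 (sin (2 * π * t) * |sin (2 * π * t)| / (2 * π)) (sin (4 * π * t) / (4 * π)) 0 := by
  have hs : sin (2 * π * Int.fract t) = sin (2 * π * t) := by
    rw [← Int.self_sub_floor, mul_sub, mul_comm (2 * π) (⌊t⌋ : ℝ)]
    exact Real.sin_sub_int_mul_two_pi _ _
  have hs2 : sin (4 * π * Int.fract t) = sin (4 * π * t) := by
    rw [← Int.self_sub_floor,
      show 4 * π * (t - ⌊t⌋) = 4 * π * t - ((2 * ⌊t⌋ : ℤ) : ℝ) * (2 * π) by push_cast; ring]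
    exact Real.sin_sub_int_mul_two_pi _ _
  have hc : cos (4 * π * Int.fract t) = 1 - 2 * sin (2 * π * Int.fract t) ^ 2 := by
    rw [show 4 * π * Int.fract t = 2 * (2 * π * Int.fract t) by ring, cos_two_mul, cos_sq']
    ring
  have h0 := Int.fract_nonneg t
  have h1 := Int.fract_lt_one t
  have hπ := pi_pos
  rw [← hs, ← hs2]
  unfold tpcPi
  dsimp only
  rw [hc]
  split_ifs with h
  · have : 0 ≤ sin (2 * π * Int.fract t) :=
      sin_nonneg_of_nonneg_of_le_pi (by positivity) (by nlinarith)
    rw [abs_of_nonneg this]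
    apply E3_ext <;> simp <;> field_simp; ring
  · have : sin (2 * π * Int.fract t) ≤ 0 := by
      rw [← Real.sin_sub_two_pi]
      exact sin_nonpos_of_nonpos_of_neg_pi_le (by nlinarith) (by nlinarith)
    rw [abs_of_nonpos this]
    apply E3_ext <;> simp <;> field_simp; ring

lemma hasDerivAt_mul_abs (x : ℝ) : HasDerivAt (fun y : ℝ => y * |y|) (2 * |x|) x := by
  rcases eq_or_ne x 0 with rfl | hx
  · rw [hasDerivAt_iff_tendsto_slope]
    have h : Filter.Tendsto (fun y : ℝ => |y|) (nhdsWithin 0 {0}ᶜ) (nhds (2 * |(0 : ℝ)|)) := by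
      have := (continuous_abs (G := ℝ)).tendsto 0
      simp only [abs_zero, mul_zero] at this ⊢
      exact this.mono_left nhdsWithin_le_nhds
    refine h.congr' ?_
    filter_upwards [self_mem_nhdsWithin] with y hy
    have : y ≠ 0 := hy
    simp [slope_def_field]
    field_simp
  · refine ((hasDerivAt_id x).mul (hasDerivAt_abs hx)).congr_deriv ?_
    rcases lt_or_gt_of_ne hx with h | h
    · simp [h, abs_of_neg]; ring
    · simp [h, abs_of_pos]; ring

lemma hasDerivAt_sin_mul (a t : ℝ) :
    HasDerivAt (fun t => sin (a * t)) (a * cos (a * t)) t := by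
  simpa [mul_comm] using (((hasDerivAt_id t).const_mul a).sin)

lemma hasDerivAt_cos_mul (a t : ℝ) :
    HasDerivAt (fun t => cos (a * t)) (-(a * sin (a * t))) t := by
  simpa [mul_comm] using (((hasDerivAt_id t).const_mul a).cos)

lemma hasDerivAt_vec3 {f g : ℝ → ℝ} {f' g' t : ℝ} (hf : HasDerivAt f f' t)
    (hg : HasDerivAt g g' t) :
    HasDerivAt (fun t => vec3 (f t) (g t) 0) (vec3 f' g' 0) t := by
  simp only [vec3_eq_smul]
  exact (hf.smul_const e1).add (hg.smul_const e2)

lemma hasDerivAt_tpcPi (t : ℝ) : HasDerivAt tpcPi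
    (vec3 (2 * (|sin (2 * π * t)| * cos (2 * π * t))) (cos (4 * π * t)) 0) t := by
  rw [funext tpcPi_eq]
  have hπ := pi_pos
  refine hasDerivAt_vec3 ?_ ?_
  · have := ((hasDerivAt_mul_abs (sin (2 * π * t))).comp t
      (hasDerivAt_sin_mul (2 * π) t)).div_const (2 * π)
    refine this.congr_deriv ?_
    field_simp
  · refine ((hasDerivAt_sin_mul (4 * π) t).div_const (4 * π)).congr_deriv ?_
    field_simp

lemma deriv_tpcPi : deriv tpcPi = fun t =>
    vec3 (2 * (|sin (2 * π * t)| * cos (2 * π * t))) (cos (4 * π * t)) 0 :=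
  funext fun t => (hasDerivAt_tpcPi t).deriv

lemma continuous_deriv_tpcPi : Continuous (deriv tpcPi) := by
  rw [deriv_tpcPi]
  simp only [vec3_eq_smul]
  fun_prop

lemma abs_sin_sub_le (x y : ℝ) : |sin x - sin y| ≤ |x - y| := by
  simpa [Real.dist_eq] using Real.lipschitzWith_sin.dist_le_mul x y

lemma abs_cos_sub_le (x y : ℝ) : |cos x - cos y| ≤ |x - y| := by
  simpa [Real.dist_eq] using Real.lipschitzWith_cos.dist_le_mul x y

lemma norm_e1 : ‖e1‖ = 1 := by simp [e1, norm_vec3]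
lemma norm_e2 : ‖e2‖ = 1 := by
  have := norm_vec3 0 1
  simpa [e2] using this

lemma lipschitz_deriv_tpcPi : LipschitzWith (Real.toNNReal (12 * π)) (deriv tpcPi) := by
  have hπ := pi_pos
  refine LipschitzWith.of_dist_le_mul fun s t => ?_
  rw [Real.coe_toNNReal _ (by positivity), deriv_tpcPi, dist_eq_norm, Real.dist_eq]
  have hscale : ∀ a : ℝ, 0 ≤ a → |a * s - a * t| = a * |s - t| := fun a ha => by
    rw [← mul_sub, abs_mul, abs_of_nonneg ha]
  have hs := (abs_abs_sub_abs_le (sin (2 * π * s)) (sin (2 * π * t))).trans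
    (abs_sin_sub_le (2 * π * s) (2 * π * t))
  have hc := abs_cos_sub_le (2 * π * s) (2 * π * t)
  have hc4 := abs_cos_sub_le (4 * π * s) (4 * π * t)
  rw [hscale _ (by positivity)] at hs hc hc4
  set A := |sin (2 * π * s)|
  set B := |sin (2 * π * t)|
  set C := cos (2 * π * s)
  set D := cos (2 * π * t)
  have hB : |B| ≤ 1 := by rw [abs_abs]; exact abs_sin_le_one _
  have hC : |C| ≤ 1 := abs_cos_le_one _
  have key : |2 * (A * C) - 2 * (B * D)| ≤ 8 * π * |s - t| := by
    rw [show 2 * (A * C) - 2 * (B * D) = 2 * ((A - B) * C + B * (C - D)) by ring, abs_mul, abs_two]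
    have h1 : |(A - B) * C| ≤ |A - B| := by
      rw [abs_mul]; exact mul_le_of_le_one_right (abs_nonneg _) hC
    have h2 : |B * (C - D)| ≤ |C - D| := by
      rw [abs_mul]; exact mul_le_of_le_one_left (abs_nonneg _) hB
    linarith [abs_add_le ((A - B) * C) (B * (C - D))]
  have heq : vec3 (2 * (A * C)) (cos (4 * π * s)) 0 - vec3 (2 * (B * D)) (cos (4 * π * t)) 0
      = (2 * (A * C) - 2 * (B * D)) • e1 + (cos (4 * π * s) - cos (4 * π * t)) • e2 := by
    simp only [vec3_eq_smul]; module
  rw [heq]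
  refine (norm_add_le _ _).trans ?_
  rw [norm_smul, norm_smul, norm_e1, norm_e2, Real.norm_eq_abs, Real.norm_eq_abs]
  linarith

lemma sin_four_pi (t : ℝ) : sin (4 * π * t) = 2 * sin (2 * π * t) * cos (2 * π * t) := by
  rw [← sin_two_mul]; ring_nf

lemma cos_four_pi (t : ℝ) : cos (4 * π * t) = 1 - 2 * sin (2 * π * t) ^ 2 := by
  rw [show 4 * π * t = 2 * (2 * π * t) by ring, cos_two_mul, cos_sq']; ring

lemma norm_deriv_tpcPi (t : ℝ) : ‖deriv tpcPi t‖ = 1 := by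
  rw [deriv_tpcPi, norm_vec3, Real.sqrt_eq_one, ← sin_sq_add_cos_sq (4 * π * t), sin_four_pi]
  simp only [mul_pow, sq_abs]
  ring

lemma dihedralSymmetric_tpcPi : DihedralSymmetric 1 tpcPi := by
  intro i t
  have a1 : sin (2 * π * (1 / 2 - t)) = sin (2 * π * t) := by
    rw [show 2 * π * (1 / 2 - t) = π - 2 * π * t by ring, sin_pi_sub]
  have a2 : sin (4 * π * (1 / 2 - t)) = -sin (4 * π * t) := by
    rw [show 4 * π * (1 / 2 - t) = 2 * π - 4 * π * t by ring, sin_two_pi_sub]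
  have b1 : sin (2 * π * (t - 1 / 2)) = -sin (2 * π * t) := by
    rw [show 2 * π * (t - 1 / 2) = 2 * π * t - π by ring, sin_sub_pi]
  have b2 : sin (4 * π * (t - 1 / 2)) = sin (4 * π * t) := by
    rw [show 4 * π * (t - 1 / 2) = 4 * π * t - 2 * π by ring, sin_sub_two_pi]
  have c1 : sin (2 * π * (1 - t)) = -sin (2 * π * t) := by
    rw [show 2 * π * (1 - t) = 2 * π - 2 * π * t by ring, sin_two_pi_sub]
  have c2 : sin (4 * π * (1 - t)) = -sin (4 * π * t) := by
    rw [show 4 * π * (1 - t) = (2 * π - 4 * π * t) + 2 * π by ring, sin_add_two_pi, sin_two_pi_sub]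
  rw [tpcPi_eq, tpcPi_eq]
  fin_cases i
  · simp only [Rot, psi, Fin.zero_eta, Matrix.cons_val_zero, a1, a2]
    apply E3_ext <;> simp [neg_div]
  · simp only [Rot, psi, Fin.mk_one, Matrix.cons_val_one, Matrix.cons_val_zero, b1, b2]
    apply E3_ext <;> simp [neg_div]
  · simp only [Rot, psi, Fin.reduceFinMk, Matrix.cons_val, c1, c2]
    apply E3_ext <;> simp [neg_div]

lemma sin_two_pi_ne_zero {t : ℝ} (ht : ∀ n : ℤ, t ≠ (n : ℝ) / 2) : sin (2 * π * t) ≠ 0 := by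
  intro h
  obtain ⟨n, hn⟩ := Real.sin_eq_zero_iff.1 h
  refine ht n ?_
  have hπ := pi_pos
  have : (n - 2 * t) * π = 0 := by linarith
  rcases mul_eq_zero.1 this with h | h <;> linarith

lemma hasDerivAt_deriv_tpcPi {t : ℝ} (ht : ∀ n : ℤ, t ≠ (n : ℝ) / 2) :
    HasDerivAt (deriv tpcPi)
      (vec3 (4 * π * (SignType.sign (sin (2 * π * t)) * cos (4 * π * t)))
        (-(4 * π * sin (4 * π * t))) 0) t := by
  rw [deriv_tpcPi]
  have hs := sin_two_pi_ne_zero ht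
  refine hasDerivAt_vec3 ?_ (hasDerivAt_cos_mul _ _)
  have := ((((hasDerivAt_abs hs).comp t (hasDerivAt_sin_mul (2 * π) t)).mul
    (hasDerivAt_cos_mul (2 * π) t)).const_mul 2)
  refine this.congr_deriv ?_
  rw [cos_four_pi]
  have hc := cos_sq' (2 * π * t)
  have habs : |sin (2 * π * t)| = SignType.sign (sin (2 * π * t)) * sin (2 * π * t) :=
    (sign_mul_self _).symm
  simp only [Function.comp_apply]
  rw [habs]
  linear_combination (4 * π * (SignType.sign (sin (2 * π * t)) : ℝ)) * hc

lemma norm_deriv_deriv_tpcPi {t : ℝ} (ht : ∀ n : ℤ, t ≠ (n : ℝ) / 2) :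
    ‖deriv (deriv tpcPi) t‖ = 4 * π := by
  rw [(hasDerivAt_deriv_tpcPi ht).deriv, norm_vec3]
  have hπ := pi_pos
  have hsq : (SignType.sign (sin (2 * π * t)) : ℝ) ^ 2 = 1 := by
    rcases lt_or_gt_of_ne (sin_two_pi_ne_zero ht) with h | h
    · simp [sign_neg h]
    · simp [sign_pos h]
  rw [Real.sqrt_eq_iff_eq_sq (by positivity) (by positivity)]
  linear_combination (16 * π ^ 2 * cos (4 * π * t) ^ 2) * hsq
    + 16 * π ^ 2 * sin_sq_add_cos_sq (4 * π * t)

/-- Membership in either circle (`ε = 1` or `ε = -1`) as a polynomial equation. -/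
lemma circle_iff {x : E3} {ε : ℝ} (hε : ε ^ 2 = 1) (h2 : x 2 = 0) :
    ‖x - (ε * (1 / (4 * π))) • e1‖ = 1 / (4 * π) ↔ 2 * π * (x 0 ^ 2 + x 1 ^ 2) = ε * x 0 := by
  have hπ := pi_pos
  have hx : x - (ε * (1 / (4 * π))) • e1 = vec3 (x 0 - ε * (1 / (4 * π))) (x 1) 0 := by
    apply E3_ext <;> simp [e1, h2]
  rw [hx, norm_vec3, Real.sqrt_eq_iff_eq_sq (by positivity) (by positivity)]
  have hr : 4 * π * (1 / (4 * π)) = 1 := by field_simp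
  constructor
  · intro h
    linear_combination 2 * π * h + ε * x 0 * hr - 2 * π * (1 / (4 * π)) ^ 2 * hε
  · intro h
    have : 2 * π * ((x 0 - ε * (1 / (4 * π))) ^ 2 + x 1 ^ 2) = 2 * π * (1 / (4 * π)) ^ 2 := by
      linear_combination h - ε * x 0 * hr + 2 * π * (1 / (4 * π)) ^ 2 * hε
    exact mul_left_cancel₀ (by positivity) this

lemma circle_pos_iff (x : E3) : (x 2 = 0 ∧ ‖x - (1 / (4 * π)) • e1‖ = 1 / (4 * π)) ↔
    x 2 = 0 ∧ 2 * π * (x 0 ^ 2 + x 1 ^ 2) = x 0 := by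
  refine and_congr_right fun h => ?_
  simpa using circle_iff (ε := 1) (by norm_num) h

lemma circle_neg_iff (x : E3) : (x 2 = 0 ∧ ‖x + (1 / (4 * π)) • e1‖ = 1 / (4 * π)) ↔
    x 2 = 0 ∧ 2 * π * (x 0 ^ 2 + x 1 ^ 2) = -x 0 := by
  refine and_congr_right fun h => ?_
  simpa using circle_iff (ε := -1) (by norm_num) h

lemma exists_angle {a b : ℝ} (h : a ^ 2 + b ^ 2 = 1) : ∃ θ : ℝ, cos θ = a ∧ sin θ = b := by
  have hn : ‖(⟨a, b⟩ : ℂ)‖ = 1 := by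
    rw [Complex.norm_eq_sqrt_sq_add_sq, Real.sqrt_eq_one]; exact h
  have h0 : (⟨a, b⟩ : ℂ) ≠ 0 := by
    intro h; simp [h] at hn
  exact ⟨Complex.arg ⟨a, b⟩, by simp [Complex.cos_arg h0, hn], by simp [Complex.sin_arg, hn]⟩

lemma exists_of_circle_pos {x : E3} (h2 : x 2 = 0)
    (h : 2 * π * (x 0 ^ 2 + x 1 ^ 2) = x 0) : ∃ t, tpcPi t = x := by
  have hπ := pi_pos
  obtain ⟨θ, hc, hs⟩ := exists_angle (a := 1 - 4 * π * x 0) (b := 4 * π * x 1)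
    (by linear_combination 8 * π * h)
  -- The point is attained at any `t` with `4πt ≡ θ` modulo `2π` lying on the branch `sin(2πt) ≥ 0`.
  have main : ∀ t, cos (4 * π * t) = cos θ → sin (4 * π * t) = sin θ → 0 ≤ sin (2 * π * t) →
      tpcPi t = x := by
    intro t htc hts h0
    rw [tpcPi_eq, abs_of_nonneg h0, hts, hs]
    have := cos_four_pi t
    apply E3_ext
    · rw [vec3_zero, div_eq_iff (by positivity)]
      linarith
    · rw [vec3_one]; field_simp
    · rw [vec3_two, h2]
  have e : 4 * π * (θ / (4 * π)) = θ := by field_simp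
  have e' : 4 * π * (θ / (4 * π) + 1 / 2) = θ + 2 * π := by field_simp; ring
  rcases le_total 0 (sin (2 * π * (θ / (4 * π)))) with h0 | h0
  · exact ⟨_, main (θ / (4 * π)) (by rw [e]) (by rw [e]) h0⟩
  · refine ⟨_, main (θ / (4 * π) + 1 / 2) (by rw [e', cos_add_two_pi])
      (by rw [e', sin_add_two_pi]) ?_⟩
    rw [show 2 * π * (θ / (4 * π) + 1 / 2) = 2 * π * (θ / (4 * π)) + π by ring, sin_add_pi]
    linarith

lemma range_tpcPi : Set.range tpcPi =
    {x : E3 | x 2 = 0 ∧ ‖x - (1 / (4 * π)) • e1‖ = 1 / (4 * π)} ∪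
      {x : E3 | x 2 = 0 ∧ ‖x + (1 / (4 * π)) • e1‖ = 1 / (4 * π)} := by
  have hπ := pi_pos
  ext x
  simp only [mem_union, mem_ofPred_eq, circle_pos_iff, circle_neg_iff, mem_range]
  constructor
  · rintro ⟨t, rfl⟩
    rw [tpcPi_eq]
    simp only [vec3_zero, vec3_one, vec3_two, true_and, sin_four_pi]
    have hsc := cos_sq' (2 * π * t)
    rcases le_total 0 (sin (2 * π * t)) with h | h
    · left
      rw [abs_of_nonneg h]
      field_simp
      rw [hsc]; ring
    · right
      rw [abs_of_nonpos h]
      field_simp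
      rw [hsc]; ring
  · rintro (⟨h2, h⟩ | ⟨h2, h⟩)
    · exact exists_of_circle_pos h2 h
    · obtain ⟨t, ht⟩ := exists_of_circle_pos (x := Rot 1 x) (by simp [Rot, h2])
        (by simpa [Rot] using h)
      refine ⟨t + 1 / 2, ?_⟩
      have hsym := dihedralSymmetric_tpcPi 1 (t + 1 / 2)
      rw [← hsym, show psi 1 1 (t + 1 / 2) = t by simp [psi], ht]
      apply E3_ext <;> simp [Rot]

/-- The explicit curve `tpc[π]` is continuously differentiable with
Lipschitz continuous derivative, is parametrized by arclength, is D₂-symmetric, its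
second derivative exists at all `t ∉ (1/2)ℤ` with norm `4π` there, and its image is the
union of the two circles of radius `1/(4π)` in the plane `{x₃ = 0}` centered at
`±(1/(4π))e₁`, which meet exactly at the origin. -/
theorem tpcPi_properties :
    ContDiff ℝ 1 tpcPi ∧
    (∃ K : NNReal, LipschitzWith K (deriv tpcPi)) ∧
    (∀ t : ℝ, ‖deriv tpcPi t‖ = 1) ∧
    DihedralSymmetric 1 tpcPi ∧
    (∀ t : ℝ, (∀ n : ℤ, t ≠ (n : ℝ) / 2) →
      DifferentiableAt ℝ (deriv tpcPi) t ∧ ‖deriv (deriv tpcPi) t‖ = 4 * π) ∧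
    Set.range tpcPi =
      {x : E3 | x 2 = 0 ∧ ‖x - (1 / (4 * π)) • e1‖ = 1 / (4 * π)} ∪
        {x : E3 | x 2 = 0 ∧ ‖x + (1 / (4 * π)) • e1‖ = 1 / (4 * π)} ∧
    {x : E3 | x 2 = 0 ∧ ‖x - (1 / (4 * π)) • e1‖ = 1 / (4 * π)} ∩
        {x : E3 | x 2 = 0 ∧ ‖x + (1 / (4 * π)) • e1‖ = 1 / (4 * π)} = {0} := by
  refine ⟨?_, ⟨_, lipschitz_deriv_tpcPi⟩, norm_deriv_tpcPi, dihedralSymmetric_tpcPi,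
    fun t ht => ⟨(hasDerivAt_deriv_tpcPi ht).differentiableAt, norm_deriv_deriv_tpcPi ht⟩,
    range_tpcPi, ?_⟩
  · exact contDiff_one_iff_deriv.2
      ⟨fun t => (hasDerivAt_tpcPi t).differentiableAt, continuous_deriv_tpcPi⟩
  · have hπ := pi_pos
    ext x
    simp only [mem_inter_iff, mem_ofPred_eq, circle_pos_iff, circle_neg_iff, mem_singleton_iff]
    constructor
    · rintro ⟨⟨h2, hp⟩, -, hm⟩
      have h0 : x 0 = 0 := by linarith
      have h1 : x 1 = 0 := by
        rw [h0] at hp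
        have : x 1 ^ 2 = 0 := by
          refine ((mul_eq_zero (a := 2 * π)).1 ?_).resolve_left (by positivity)
          linarith
        exact pow_eq_zero_iff two_ne_zero |>.1 this
      exact E3_ext h0 h1 h2
    · rintro rfl
      simp
end
end
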